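/- Let H = (V, E) be a finite hypergraph in which every hyperedge e ∈ E has |e| ≥ 2 and carries a submodular cardinality-based splitting function w_e. Then for every ε > 0 there exist a finite auxiliary node set A with |A| ≤ Σ_{e∈E} 2·(1 + ⌈log_{1+ε}|e|⌉) and a weight function ŵ : (V ∪ A) × (V ∪ A) → ℝ≥0 whose number of nonzero values is at most Σ_{e∈E} (2|e| + 1)·(1 + ⌈log_{1+ε}|e|⌉), such that for every S ⊆ V we have cut_H(S) ≤ min_{T ⊆ A} dircut_ŵ(S ∪ T) ≤ (1+ε)·cut_H(S). -/

import Mathlib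

/-- Directed cut value of a weighted directed graph on a finite node set. -/
noncomputable def dirCut {N : Type*} [Fintype N] [DecidableEq N]
    (W : N → N → ℝ) (U : Finset N) : ℝ :=
  ∑ u ∈ U, ∑ v ∈ Uᶜ, W u v

/-!
Summation by parts writes a symmetric concave `w` on `{0, …, n}` with `w 0 = 0` as a nonnegative
combination of truncated tents: `2 * w p` is the sum over `0 < i < n` of
`(2 * w i - w (i - 1) - w (i + 1)) * min p (n - p) i (n - i)`. Rounding each truncation level
`min i (n - i)` down to a power of `1 + ε` changes a tent by a factor of at most `1 + ε`, and leaves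
only `1 + ⌈log_{1+ε} n⌉` different levels. A truncated tent is exactly the augmented cut function of
a gadget with two auxiliary nodes, so the sparsifier is the union of these gadgets.
-/

open Finset

section Curvature

variable {R : Type*} [CommRing R]

/-- The negated second difference of a sequence. The index is shifted to avoid subtraction:
`curvature w j` is centred at `j + 1`. -/
def curvature (w : ℕ → R) (j : ℕ) : R :=
  2 * w (j + 1) - w j - w (j + 2)

lemma sum_curvature_mul_eq {w h : ℕ → R} {N : ℕ} (hw_zero : w 0 = 0) (hw_top : w (N + 1) = 0)
    (hh_zero : h 0 = 0) (hh_top : h (N + 1) = 0) :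
    ∑ j ∈ range N, curvature w j * h (j + 1) = ∑ j ∈ range N, w (j + 1) * curvature h j := by
  -- The difference of the two sides telescopes along the discrete Wronskian.
  let wronskian (j : ℕ) : R := w (j + 1) * h j - w j * h (j + 1)
  have htele (j : ℕ) : curvature w j * h (j + 1) - w (j + 1) * curvature h j =
      wronskian j - wronskian (j + 1) := by
    simp only [curvature, wronskian]
    ring
  rw [← sub_eq_zero, ← sum_sub_distrib, sum_congr rfl fun j _ ↦ htele j, sum_range_sub']
  simp [wronskian, hw_zero, hw_top, hh_zero, hh_top]

lemma curvature_min_min_min {p q j : ℕ} (hj : j + 2 ≤ p + q) :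
    curvature (fun i ↦ ((min (min p q) (min i (p + q - i)) : ℕ) : R)) j =
      (if p = j + 1 then 1 else 0) + (if q = j + 1 then 1 else 0) := by
  have hnat : 2 * min (min p q) (min (j + 1) (p + q - (j + 1))) =
      min (min p q) (min j (p + q - j)) + min (min p q) (min (j + 2) (p + q - (j + 2))) +
        ((if p = j + 1 then 1 else 0) + (if q = j + 1 then 1 else 0)) := by
    split_ifs <;> omega
  have hcast := congrArg (Nat.cast : ℕ → R) hnat
  push_cast at hcast
  simp only [curvature]
  rw [hcast]
  ring

end Curvature

lemma sum_range_mul_ite_eq {R : Type*} [Semiring R] {w : ℕ → R} {N p : ℕ} (hzero : w 0 = 0)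
    (htop : w (N + 1) = 0) (hp : p ≤ N + 1) :
    ∑ j ∈ range N, w (j + 1) * (if p = j + 1 then 1 else 0) = w p := by
  have hall : ∑ i ∈ range (N + 2), w i * (if p = i then 1 else 0) = w p := by
    simp [Nat.lt_succ_iff.mpr hp]
  simpa only [sum_range_succ, sum_range_succ' _ N, hzero, htop, zero_mul, add_zero] using hall

/-- A submodular cardinality-based splitting function of a hyperedge with `n` nodes. Submodularity
is encoded as concavity on `{0, …, n}`, and symmetry in a form without subtraction. -/
structure IsSplitting (n : ℕ) (w : ℕ → ℝ) : Prop where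
  zero : w 0 = 0
  symm : ∀ p q, p + q = n → w p = w q
  curvature_nonneg : ∀ j, j + 2 ≤ n → 0 ≤ curvature w j

lemma IsSplitting.sum_curvature_mul_min {w : ℕ → ℝ} {p q : ℕ} (hw : IsSplitting (p + q) w) :
    ∑ j ∈ range (p + q - 1),
        curvature w j * (min (min p q) (min (j + 1) (p + q - (j + 1))) : ℕ) = 2 * w p := by
  rcases hN : p + q with _ | N
  · obtain rfl : p = 0 := by omega
    simp [hw.zero]
  have htop : w (N + 1) = 0 := (hw.symm _ 0 (by omega)).trans hw.zero
  have hparts := sum_curvature_mul_eq (N := N) (w := w)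
    (h := fun i ↦ ((min (min p q) (min i (p + q - i)) : ℕ) : ℝ)) hw.zero htop
    (by simp) (by simp [hN])
  rw [hN] at hparts
  calc
    _ = ∑ j ∈ range N, w (j + 1) *
          ((if p = j + 1 then 1 else 0) + (if q = j + 1 then 1 else 0)) := by
      refine hparts.trans (sum_congr rfl fun j hj ↦ ?_)
      rw [mem_range] at hj
      rw [← hN, curvature_min_min_min (by omega)]
    _ = w p + w q := by
      simp_rw [mul_add, sum_add_distrib]
      rw [sum_range_mul_ite_eq hw.zero htop (by omega),
        sum_range_mul_ite_eq hw.zero htop (by omega)]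
    _ = 2 * w p := by rw [hw.symm q p (by omega), two_mul]

section Rounding

variable {β : ℝ}

lemma exists_fin_pow_near {K : ℕ} {t : ℝ} (hβ : 1 < β) (ht : 1 ≤ t) (htK : t ≤ β ^ K) :
    ∃ k : Fin (K + 1), β ^ (k : ℕ) ≤ t ∧ t ≤ β * β ^ (k : ℕ) := by
  obtain ⟨k, hle, hlt⟩ := exists_nat_pow_near ht hβ
  have hkK : k ≤ K := (pow_le_pow_iff_right₀ hβ).mp (hle.trans htK)
  exact ⟨⟨k, Nat.lt_succ_of_le hkK⟩, hle, by simpa only [pow_succ'] using hlt.le⟩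

lemma min_le_mul_min {x s t : ℝ} (hβ : 1 ≤ β) (hx : 0 ≤ x) (hts : t ≤ β * s) :
    min x t ≤ β * min x s := by
  rw [mul_min_of_nonneg _ _ (zero_le_one.trans hβ)]
  exact min_le_min (le_mul_of_one_le_left hx hβ) hts

lemma exists_sum_mul_min_pow_approx {J : Type*} {s : Finset J} {c t : J → ℝ} {K : ℕ} (hβ : 1 < β)
    (hc : ∀ j ∈ s, 0 ≤ c j) (ht : ∀ j ∈ s, 1 ≤ t j) (htK : ∀ j ∈ s, t j ≤ β ^ K) :
    ∃ a : Fin (K + 1) → ℝ, (∀ k, 0 ≤ a k) ∧ ∀ x : ℝ, 0 ≤ x →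
      ∑ j ∈ s, c j * min x (t j) ≤ ∑ k, a k * min x (β ^ (k : ℕ)) ∧
      ∑ k, a k * min x (β ^ (k : ℕ)) ≤ β * ∑ j ∈ s, c j * min x (t j) := by
  have hβ_pos : 0 < β := zero_lt_one.trans hβ
  choose! κ hκ_le hκ_ge using fun j hj ↦ exists_fin_pow_near hβ (ht j hj) (htK j hj)
  refine ⟨fun k ↦ ∑ j ∈ s with κ j = k, β * c j, fun k ↦ sum_nonneg fun j hj ↦
    mul_nonneg hβ_pos.le (hc j (mem_filter.mp hj).1), fun x hx ↦ ?_⟩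
  have hgroup : ∑ k, (∑ j ∈ s with κ j = k, β * c j) * min x (β ^ (k : ℕ)) =
      ∑ j ∈ s, β * c j * min x (β ^ (κ j : ℕ)) := by
    rw [← sum_fiberwise s κ]
    refine sum_congr rfl fun k _ ↦ ?_
    rw [sum_mul]
    exact sum_congr rfl fun j hj ↦ by rw [(mem_filter.mp hj).2]
  rw [hgroup, mul_sum]
  constructor <;> refine sum_le_sum fun j hj ↦ ?_
  · calc
      c j * min x (t j) ≤ c j * (β * min x (β ^ (κ j : ℕ))) :=
        mul_le_mul_of_nonneg_left (min_le_mul_min hβ.le hx (hκ_ge j hj)) (hc j hj)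
      _ = β * c j * min x (β ^ (κ j : ℕ)) := by ring
  · rw [← mul_assoc]
    exact mul_le_mul_of_nonneg_left (min_le_min_left x (hκ_le j hj))
      (mul_nonneg hβ_pos.le (hc j hj))

lemma IsSplitting.exists_sum_mul_min_min_pow_approx {n K : ℕ} {w : ℕ → ℝ} (hw : IsSplitting n w)
    (hβ : 1 < β) (hK : n ≤ β ^ K) :
    ∃ a : Fin (K + 1) → ℝ, (∀ k, 0 ≤ a k) ∧ ∀ p q : ℕ, p + q = n →
      w p ≤ ∑ k, a k * min (min (p : ℝ) q) (β ^ (k : ℕ)) ∧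
      ∑ k, a k * min (min (p : ℝ) q) (β ^ (k : ℕ)) ≤ β * w p := by
  obtain ⟨a, ha, happrox⟩ := exists_sum_mul_min_pow_approx (s := range (n - 1))
    (c := fun j ↦ curvature w j / 2) (t := fun j ↦ (min (j + 1) (n - (j + 1)) : ℕ)) hβ
    (fun j hj ↦ div_nonneg (hw.curvature_nonneg j (by rw [mem_range] at hj; omega)) zero_le_two)
    (fun j hj ↦ Nat.one_le_cast.mpr (by rw [mem_range] at hj; omega))
    (fun j hj ↦ (Nat.cast_le.mpr (by rw [mem_range] at hj; omega)).trans hK)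
  refine ⟨a, ha, fun p q hpq ↦ ?_⟩
  have hsum : ∑ j ∈ range (n - 1), curvature w j / 2 *
      min (min (p : ℝ) q) ((min (j + 1) (n - (j + 1)) : ℕ) : ℝ) = w p := by
    subst hpq
    have htwo := hw.sum_curvature_mul_min
    simp only [Nat.cast_min (min p q), Nat.cast_min p q] at htwo
    simp only [div_mul_eq_mul_div, ← sum_div]
    rw [htwo, mul_div_cancel_left₀ _ two_ne_zero]
  simpa only [hsum] using happrox (min (p : ℝ) q) (by positivity)

end Rounding

section ArcWeight

variable {N κ : Type*} [Fintype κ] [DecidableEq N]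

/-- The weight function of the directed graph with arcs `arc k` of weight `c k`. Parallel arcs are
merged by adding their weights. -/
def arcWeight (arc : κ → N × N) (c : κ → ℝ) (u v : N) : ℝ :=
  ∑ k, if arc k = (u, v) then c k else 0

lemma arcWeight_nonneg {arc : κ → N × N} {c : κ → ℝ} (hc : ∀ k, 0 ≤ c k) (u v : N) :
    0 ≤ arcWeight arc c u v :=
  sum_nonneg fun k _ ↦ ite_nonneg (hc k) le_rfl

lemma ncard_arcWeight_ne_zero_le (arc : κ → N × N) (c : κ → ℝ) :
    {p : N × N | arcWeight arc c p.1 p.2 ≠ 0}.ncard ≤ Fintype.card κ := by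
  have hsub : {p : N × N | arcWeight arc c p.1 p.2 ≠ 0} ⊆ (univ.image arc : Finset (N × N)) := by
    intro p hp
    obtain ⟨k, -, hk⟩ := exists_ne_zero_of_sum_ne_zero hp
    exact mem_coe.mpr (mem_image.mpr ⟨k, mem_univ k, (ite_ne_right_iff.mp hk).1⟩)
  calc
    _ ≤ (univ.image arc).card := Set.ncard_coe_finset _ ▸ Set.ncard_le_ncard hsub
    _ ≤ Fintype.card κ := card_image_le

lemma dirCut_arcWeight [Fintype N] (arc : κ → N × N) (c : κ → ℝ) (U : Finset N) :
    dirCut (arcWeight arc c) U = ∑ k, if (arc k).1 ∈ U ∧ (arc k).2 ∉ U then c k else 0 := by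
  calc
    dirCut (arcWeight arc c) U = ∑ p ∈ U ×ˢ Uᶜ, ∑ k, if arc k = p then c k else 0 :=
      (sum_product U Uᶜ fun p ↦ arcWeight arc c p.1 p.2).symm
    _ = ∑ k, ∑ p ∈ U ×ˢ Uᶜ, if arc k = p then c k else 0 := sum_comm
    _ = _ := by simp only [sum_ite_eq, mem_product, mem_compl]

end ArcWeight

section Gadget

/-- The value, per unit of weight, of the arcs cut in a gadget on a hyperedge with `p` nodes inside
and `q` nodes outside the cut set and truncation level `b`. The propositions `s` and `t` say that
the auxiliary nodes receiving arcs from, respectively sending arcs to, the hyperedge are inside. -/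
def gadgetCost (p q b : ℝ) (s t : Prop) [Decidable s] [Decidable t] : ℝ :=
  (if s then 0 else p) + (if t then q else 0) + (if s ∧ ¬t then b else 0)

lemma min_le_gadgetCost {p q : ℝ} (hp : 0 ≤ p) (hq : 0 ≤ q) (b : ℝ) (s t : Prop) [Decidable s]
    [Decidable t] : min (min p q) b ≤ gadgetCost p q b s t := by
  by_cases hs : s <;> by_cases ht : t <;> simp [gadgetCost, hs, ht, hp, hq]

lemma exists_gadgetCost_eq_min (p q b : ℝ) :
    ∃ B : Finset Bool, gadgetCost p q b (false ∈ B) (true ∈ B) = min (min p q) b := by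
  rcases min_choice (min p q) b with hmin | hmin
  · rw [hmin]
    rcases min_choice p q with hpq | hpq <;> rw [hpq]
    · exact ⟨∅, by simp [gadgetCost]⟩
    · exact ⟨univ, by simp [gadgetCost]⟩
  · rw [hmin]
    exact ⟨{false}, by simp [gadgetCost]⟩

variable {V A X : Type*}

/-- The arcs of a family of cardinality-based gadgets, the gadget `x` being attached to the node set
`f x`: arcs from each node of `f x` to `(x, false)`, arcs from `(x, true)` to each node of `f x`,
and one arc from `(x, false)` to `(x, true)`. The map `φ` names the auxiliary nodes. -/
def gadgetArc (f : X → Finset V) (φ : X × Bool → A) :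
    (Σ x, (f x ⊕ f x) ⊕ Unit) → (V ⊕ A) × (V ⊕ A)
  | ⟨x, .inl (.inl v)⟩ => (.inl v, .inr (φ (x, false)))
  | ⟨x, .inl (.inr v)⟩ => (.inr (φ (x, true)), .inl v)
  | ⟨x, .inr _⟩ => (.inr (φ (x, false)), .inr (φ (x, true)))

/-- Weights for `gadgetArc`: `a x` on the arcs incident to `f x`, and `a x * b x` on the arc between
the two auxiliary nodes, which truncates the cut function of the gadget at `a x * b x`. -/
def gadgetArcWeight (f : X → Finset V) (a b : X → ℝ) : (Σ x, (f x ⊕ f x) ⊕ Unit) → ℝ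
  | ⟨x, .inl _⟩ => a x
  | ⟨x, .inr _⟩ => a x * b x

variable [DecidableEq V] [DecidableEq A] [Fintype X]

/-- The union of the cardinality-based gadgets with node sets `f x` and parameters `a x`, `b x`, as
a weighted directed graph. -/
def gadgetWeight (f : X → Finset V) (φ : X × Bool → A) (a b : X → ℝ) : V ⊕ A → V ⊕ A → ℝ :=
  arcWeight (gadgetArc f φ) (gadgetArcWeight f a b)

lemma gadgetWeight_nonneg {f : X → Finset V} {φ : X × Bool → A} {a b : X → ℝ}
    (ha : ∀ x, 0 ≤ a x) (hb : ∀ x, 0 ≤ b x) (u v : V ⊕ A) : 0 ≤ gadgetWeight f φ a b u v :=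
  arcWeight_nonneg (by rintro ⟨x, _ | _⟩; exacts [ha x, mul_nonneg (ha x) (hb x)]) u v

lemma ncard_gadgetWeight_ne_zero_le (f : X → Finset V) (φ : X × Bool → A) (a b : X → ℝ) :
    {p : (V ⊕ A) × (V ⊕ A) | gadgetWeight f φ a b p.1 p.2 ≠ 0}.ncard ≤
      ∑ x, (2 * (f x).card + 1) := by
  refine (ncard_arcWeight_ne_zero_le _ _).trans_eq ?_
  simp [Fintype.card_sigma, two_mul]

variable [Fintype V] [Fintype A]

lemma dirCut_gadgetWeight (f : X → Finset V) (φ : X × Bool → A) (a b : X → ℝ) (S : Finset V)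
    (T : Finset A) :
    dirCut (gadgetWeight f φ a b) (S.image Sum.inl ∪ T.image Sum.inr) =
      ∑ x, a x * gadgetCost (S ∩ f x).card (f x \ S).card (b x)
        (φ (x, false) ∈ T) (φ (x, true) ∈ T) := by
  rw [gadgetWeight, dirCut_arcWeight, Fintype.sum_sigma]
  refine sum_congr rfl fun x _ ↦ ?_
  have hin (P : Prop) [Decidable P] : ∑ v : f x, (if ↑v ∈ S ∧ ¬P then a x else 0) =
      a x * if P then 0 else ((S ∩ f x).card : ℝ) := by
    rw [sum_coe_sort (f x) fun v ↦ if v ∈ S ∧ ¬P then a x else 0]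
    by_cases hP : P <;> simp [hP, sum_ite_mem, inter_comm, mul_comm]
  have hout (P : Prop) [Decidable P] : ∑ v : f x, (if P ∧ ↑v ∉ S then a x else 0) =
      a x * if P then ((f x \ S).card : ℝ) else 0 := by
    rw [sum_coe_sort (f x) fun v ↦ if P ∧ v ∉ S then a x else 0]
    by_cases hP : P <;> simp [hP, sum_ite, sdiff_eq_filter, mul_comm]
  simp [-univ_eq_attach, gadgetArc, gadgetArcWeight, gadgetCost, mul_add, hin, hout]

/-- The augmented cut function of a weighted directed graph on `V ⊕ A`. -/
noncomputable def augCut (W : V ⊕ A → V ⊕ A → ℝ) (S : Finset V) : ℝ :=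
  ⨅ T : Finset A, dirCut W (S.image Sum.inl ∪ T.image Sum.inr)

lemma augCut_gadgetWeight (f : X → Finset V) (φ : X × Bool ≃ A) {a : X → ℝ} (b : X → ℝ)
    (ha : ∀ x, 0 ≤ a x) (S : Finset V) :
    augCut (gadgetWeight f φ a b) S =
      ∑ x, a x * min (min ((S ∩ f x).card : ℝ) (f x \ S).card) (b x) := by
  simp only [augCut, dirCut_gadgetWeight]
  refine le_antisymm ?_ (le_ciInf fun T ↦ sum_le_sum fun x _ ↦ mul_le_mul_of_nonneg_left
    (min_le_gadgetCost (Nat.cast_nonneg _) (Nat.cast_nonneg _) _ _ _) (ha x))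
  choose B hB using fun x ↦ exists_gadgetCost_eq_min (S ∩ f x).card (f x \ S).card (b x)
  refine (ciInf_le (Set.finite_range _).bddBelow
    (univ.filter fun y ↦ (φ.symm y).2 ∈ B (φ.symm y).1)).trans_eq ?_
  simp only [mem_filter_univ, Equiv.symm_apply_apply, hB]

end Gadget

lemma exists_augCut_approx {V ι : Type*} [Fintype V] [DecidableEq V] [Fintype ι]
    {e : ι → Finset V} {w : ι → ℕ → ℝ} {β : ℝ} {K : ι → ℕ}
    (hw : ∀ i, IsSplitting (e i).card (w i)) (hβ : 1 < β) (hK : ∀ i, (e i).card ≤ β ^ K i) :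
    ∃ (m : ℕ) (W : V ⊕ Fin m → V ⊕ Fin m → ℝ),
      (∀ u v, 0 ≤ W u v) ∧
      m = ∑ i, 2 * (1 + K i) ∧
      {p : (V ⊕ Fin m) × (V ⊕ Fin m) | W p.1 p.2 ≠ 0}.ncard ≤
        ∑ i, (2 * (e i).card + 1) * (1 + K i) ∧
      ∀ S, ∑ i, w i (S ∩ e i).card ≤ augCut W S ∧
        augCut W S ≤ β * ∑ i, w i (S ∩ e i).card := by
  choose a ha happrox using fun i ↦ (hw i).exists_sum_mul_min_min_pow_approx hβ (hK i)
  let f (x : Σ i, Fin (K i + 1)) := e x.1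
  let φ := Fintype.equivFin ((Σ i, Fin (K i + 1)) × Bool)
  let b (x : Σ i, Fin (K i + 1)) := β ^ (x.2 : ℕ)
  have ha_nonneg (x : Σ i, Fin (K i + 1)) : 0 ≤ a x.1 x.2 := ha x.1 x.2
  refine ⟨_, gadgetWeight f φ (fun x ↦ a x.1 x.2) b,
    gadgetWeight_nonneg ha_nonneg fun x ↦ pow_nonneg (zero_le_one.trans hβ.le) _,
    ?_, ?_, fun S ↦ ?_⟩
  · rw [← mul_sum]
    simp [mul_comm, add_comm]
  · refine (ncard_gadgetWeight_ne_zero_le _ _ _ _).trans_eq ?_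
    simp [f, Fintype.sum_sigma, mul_comm, add_comm]
  · have hsum i : (S ∩ e i).card + (e i \ S).card = (e i).card := by
      rw [inter_comm, card_inter_add_card_sdiff]
    rw [augCut_gadgetWeight f φ b ha_nonneg, Fintype.sum_sigma, mul_sum]
    exact ⟨sum_le_sum fun i _ ↦ (happrox i _ _ (hsum i)).1,
      sum_le_sum fun i _ ↦ (happrox i _ _ (hsum i)).2⟩

lemma le_pow_natCeil_logb {β x : ℝ} (hβ : 1 < β) (hx : 0 < x) :
    x ≤ β ^ ⌈Real.logb β x⌉₊ := by
  rw [← Real.rpow_natCast, ← Real.logb_le_iff_le_rpow hβ hx]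
  exact Nat.le_ceil _

/-- **Augmented cut sparsifiers for submodular cardinality-based hypergraph cuts.**
For a hypergraph `H = (V, E)` (hyperedges indexed by `ι`, each of size at least 2, carrying
a submodular cardinality-based splitting function `w i : ℕ → ℝ`) and any `ε > 0`, there is
an auxiliary node set `A = Fin m` with `m ≤ ∑_e 2(1 + ⌈log_{1+ε}|e|⌉)` and a nonnegative
weight function on `(V ⊕ A) × (V ⊕ A)` with at most `∑_e (2|e|+1)(1 + ⌈log_{1+ε}|e|⌉)`
nonzero values, whose augmented cut function `(1+ε)`-approximates the hypergraph cut. -/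
theorem augmented_sparsifier_scb
    {V : Type*} [Fintype V] [DecidableEq V]
    {ι : Type*} [Fintype ι]
    (e : ι → Finset V) (w : ι → ℕ → ℝ)
    (hsize : ∀ i, 2 ≤ (e i).card)
    (hw0 : ∀ i, w i 0 = 0)
    (hwtop : ∀ i, w i (e i).card = 0)
    (hnonneg : ∀ i j, j ≤ (e i).card → 0 ≤ w i j)
    (hsym : ∀ i j, j ≤ (e i).card → w i j = w i ((e i).card - j))
    (hsubmod : ∀ i j, 1 ≤ j → j + 1 ≤ (e i).card →
      w i (j - 1) + w i (j + 1) ≤ 2 * w i j)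
    (ε : ℝ) (hε : 0 < ε) :
    ∃ (m : ℕ) (W : (V ⊕ Fin m) → (V ⊕ Fin m) → ℝ),
      (∀ u v, 0 ≤ W u v) ∧
      (m : ℝ) ≤ ∑ i, 2 * (1 + (⌈Real.logb (1 + ε) ((e i).card : ℝ)⌉ : ℝ)) ∧
      (({p : (V ⊕ Fin m) × (V ⊕ Fin m) | W p.1 p.2 ≠ 0}.ncard : ℝ)
        ≤ ∑ i, (2 * ((e i).card : ℝ) + 1) *
            (1 + (⌈Real.logb (1 + ε) ((e i).card : ℝ)⌉ : ℝ))) ∧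
      ∀ S : Finset V,
        (∑ i, w i ((S ∩ e i).card))
          ≤ (⨅ T : Finset (Fin m), dirCut W (S.image Sum.inl ∪ T.image Sum.inr)) ∧
        (⨅ T : Finset (Fin m), dirCut W (S.image Sum.inl ∪ T.image Sum.inr))
          ≤ (1 + ε) * ∑ i, w i ((S ∩ e i).card) := by
  have hβ : 1 < 1 + ε := lt_add_of_pos_right 1 hε
  have hcard i : (1 : ℝ) ≤ (e i).card := Nat.one_le_cast.mpr (one_le_two.trans (hsize i))
  have hsplit i : IsSplitting (e i).card (w i) :=
    { zero := hw0 i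
      symm := fun p q hpq ↦ by rw [hsym i p (by omega), ← hpq, Nat.add_sub_cancel_left]
      curvature_nonneg := fun j hj ↦ by
        rw [curvature, sub_sub, sub_nonneg]
        exact hsubmod i (j + 1) (by omega) hj }
  obtain ⟨m, W, hW, hm, hncard, hcut⟩ := exists_augCut_approx hsplit hβ fun i ↦
    le_pow_natCeil_logb hβ (zero_lt_one.trans_le (hcard i))
  have hceil i := natCast_ceil_eq_intCast_ceil (R := ℝ) (Real.logb_nonneg hβ (hcard i))
  simp only [← hceil]
  exact ⟨m, W, hW, mod_cast hm.le, mod_cast hncard, hcut⟩
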